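/- For each fixed integer j ≥ 2, lim_{k→∞} G(f_2,…,f_{j−1} | f_j, f_k) / ((log k)/(2k)) = H(j), where H(j) is the determinant of the (j−1)×(j−1) matrix whose (r,s) entry is ⟨f_{r+1}, f_{s+1}⟩ for 1 ≤ r ≤ j−1 and 1 ≤ s ≤ j−2, and whose last column has entries r/(r+1) for 1 ≤ r ≤ j−1. -/

import Mathlib

/-! Writing `n = ⌊1/x⌋`, one has `f k x = (n mod k)/k`, so `0 ≤ f k ≤ 1` on `(0, 1]`, and for
`x > 1/k` simply `f k x = n/k`. Hence `⟨f m, f k⟩` equals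
`(1/k) ∑_{n < k} ((n mod m)/m) / (n + 1)`, the contribution of `(1/k, 1]`, up to an error of at
most `1/k` coming from `(0, 1/k]` (`abs_ip_sub_le`). The mean of `n mod m` over a period is
`(m - 1)/2`; by Dirichlet's test the sum is therefore `((m - 1)/(2m)) H_k + O(1)`, where `H_k` is
the harmonic number, and so it is asymptotic to `((m - 1)/(2m)) log k` (`tendsto_modSum_div_log`).
Thus `⟨f m, f k⟩ / (log k / (2k)) → (m - 1)/m`. Only the last column of the determinant `Gbr`
depends on `k`, so the quotient can be moved into that column, and the determinant is continuous
in its entries. -/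

open MeasureTheory

/-- `f k x = (1/k)⌊1/x⌋ − ⌊1/(kx)⌋`. -/
noncomputable def f (k : ℕ) (x : ℝ) : ℝ := (⌊1/x⌋ : ℝ) / k - (⌊1/(k*x)⌋ : ℝ)

/-- The inner product of `L²(0,1)`: `⟨g,h⟩ = ∫₀¹ g(x)h(x) dx`. -/
noncomputable def ip (g h : ℝ → ℝ) : ℝ := ∫ x in Set.Ioc (0:ℝ) 1, g x * h x

/-- `Gbr j g h = G(f₂,…,f_{j−1} | g, h)`: the determinant of the `(j−1)×(j−1)`
matrix with entries `⟨f_{r+2},f_{s+2}⟩`, whose last column is `⟨f_{r+2},h⟩`, last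
row `⟨g,f_{s+2}⟩`, and bottom-right corner `⟨g,h⟩`.  For `j = 2` it is `⟨g,h⟩`. -/
noncomputable def Gbr (j : ℕ) (g h : ℝ → ℝ) : ℝ :=
  Matrix.det (Matrix.of fun r s : Fin (j - 1) =>
    ip (if r.val = j - 2 then g else f (r.val + 2))
       (if s.val = j - 2 then h else f (s.val + 2)))

/-- `H j`: the determinant of the `(j−1)×(j−1)` matrix with entries
`⟨f_{r+2},f_{s+2}⟩` except that the last column is `(r+1)/(r+2)`,
i.e. `1/2, 2/3, …, (j−1)/j`. -/
noncomputable def H (j : ℕ) : ℝ :=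
  Matrix.det (Matrix.of fun r s : Fin (j - 1) =>
    if s.val = j - 2 then ((r.val : ℝ) + 1) / ((r.val : ℝ) + 2)
    else ip (f (r.val + 2)) (f (s.val + 2)))

open Filter Topology Finset

/-- The contribution of `x ∈ (1/k, 1]` to `k * ⟨f m, f k⟩`: the sum over `n < k` of
`((n mod m)/m) / (n + 1)`. -/
noncomputable def modSum (m k : ℕ) : ℝ :=
  ∑ n ∈ range k, (((n % m : ℕ) : ℝ) / m) / (n + 1)

lemma f_eq_mod {k : ℕ} (hk : 0 < k) {x : ℝ} (hx : 0 < x) :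
    f k x = ((⌊1 / x⌋₊ % k : ℕ) : ℝ) / k := by
  have hk' : (0 : ℝ) < k := by exact_mod_cast hk
  have h1 : (⌊1 / x⌋ : ℝ) = (⌊1 / x⌋₊ : ℝ) := by
    rw [← natCast_floor_eq_intCast_floor (by positivity)]
  have h2 : (⌊1 / (k * x)⌋ : ℝ) = ((⌊1 / x⌋₊ / k : ℕ) : ℝ) := by
    rw [← natCast_floor_eq_intCast_floor (by positivity), ← Nat.floor_div_natCast]
    congr 2
    field_simp
  have h3 : ((⌊1 / x⌋₊ : ℕ) : ℝ) = (k : ℝ) * ((⌊1 / x⌋₊ / k : ℕ) : ℝ) + ((⌊1 / x⌋₊ % k : ℕ) : ℝ) := by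
    exact_mod_cast (Nat.div_add_mod ⌊1 / x⌋₊ k).symm
  rw [f, h1, h2, h3]
  field_simp
  ring

lemma f_nonneg {k : ℕ} (hk : 0 < k) {x : ℝ} (hx : 0 < x) : 0 ≤ f k x := by
  rw [f_eq_mod hk hx]; positivity

lemma f_le_one {k : ℕ} (hk : 0 < k) {x : ℝ} (hx : 0 < x) : f k x ≤ 1 := by
  rw [f_eq_mod hk hx]
  apply div_le_one_of_le₀ _ (by positivity)
  exact_mod_cast (Nat.mod_lt _ hk).le

lemma measurable_f (k : ℕ) : Measurable (f k) := by
  unfold f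
  fun_prop

lemma integrableOn_mul {m k : ℕ} (hm : 0 < m) (hk : 0 < k) :
    IntegrableOn (fun x => f m x * f k x) (Set.Ioc 0 1) := by
  refine Measure.integrableOn_of_bounded (M := 1) (by simp)
    ((measurable_f m).mul (measurable_f k)).aestronglyMeasurable ?_
  filter_upwards [ae_restrict_mem measurableSet_Ioc] with x hx
  have h1 := f_nonneg hm hx.1
  have h2 := f_nonneg hk hx.1
  rw [Real.norm_of_nonneg (by positivity)]
  exact mul_le_one₀ (f_le_one hm hx.1) h2 (f_le_one hk hx.1)

/-- On the block `(1/(n+1), 1/n]` the function `⌊1/x⌋` takes the constant value `n`. -/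
lemma floor_block {n : ℕ} (hn : 0 < n) {x : ℝ}
    (hx : x ∈ Set.Ioc (1 / ((n : ℝ) + 1)) (1 / n)) : ⌊1 / x⌋₊ = n := by
  have hn' : (0 : ℝ) < n := by exact_mod_cast hn
  have hx0 : 0 < x := lt_trans (by positivity) hx.1
  rw [Nat.floor_eq_iff (by positivity)]
  constructor
  · rw [le_one_div hn' hx0]; exact hx.2
  · rw [one_div_lt hx0 (by positivity)]; exact hx.1

/-- The blocks `(1/(n+1), 1/n]`, `n < k`, tile `(1/k, 1]`. The bound `k ≤ K` is what makes
`⌊1/x⌋ < K`, so that `f K x = ⌊1/x⌋ / K` on all of them. -/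
lemma integral_blocks {m K : ℕ} (hm : 0 < m) {k : ℕ} (hk : 1 ≤ k) (hkK : k ≤ K) :
    ∫ x in Set.Ioc (1 / (k : ℝ)) 1, f m x * f K x = modSum m k / K := by
  induction k, hk using Nat.le_induction with
  | base => simp [modSum]
  | succ n hn ih =>
    have hn' : (0 : ℝ) < n := by exact_mod_cast hn
    have hKpos : 0 < K := by omega
    have hle1 : 1 / ((n : ℝ) + 1) ≤ 1 / n := by gcongr; linarith
    have hle2 : 1 / (n : ℝ) ≤ 1 := by
      rw [div_le_one hn']; exact_mod_cast hn
    have hpos : 0 < 1 / ((n : ℝ) + 1) := by positivity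
    have hI := integrableOn_mul hm hKpos
    have hblock : ∫ x in Set.Ioc (1 / ((n : ℝ) + 1)) (1 / n), f m x * f K x
        = (((n % m : ℕ) : ℝ) / m) / (n + 1) / K := by
      have hc : Set.EqOn (fun x => f m x * f K x)
          (fun _ => (((n % m : ℕ) : ℝ) / m) * ((n : ℝ) / K))
          (Set.Ioc (1 / ((n : ℝ) + 1)) (1 / n)) := by
        intro x hx
        have hx0 : 0 < x := hpos.trans hx.1
        simp only [f_eq_mod hm hx0, f_eq_mod hKpos hx0, floor_block hn hx,
          Nat.mod_eq_of_lt (show n < K by omega)]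
      rw [setIntegral_congr_fun measurableSet_Ioc hc, setIntegral_const,
        Real.volume_real_Ioc_of_le hle1, smul_eq_mul]
      have : (K : ℝ) ≠ 0 := by positivity
      have : (m : ℝ) ≠ 0 := by positivity
      field_simp
      ring
    push_cast
    rw [← Set.Ioc_union_Ioc_eq_Ioc hle1 hle2,
      setIntegral_union (Set.Ioc_disjoint_Ioc_of_le le_rfl) measurableSet_Ioc
        (hI.mono_set (Set.Ioc_subset_Ioc hpos.le hle2))
        (hI.mono_set (Set.Ioc_subset_Ioc (by positivity) le_rfl)),
      hblock, ih (by omega), modSum, modSum, sum_range_succ]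
    ring

lemma abs_ip_sub_le {m k : ℕ} (hm : 0 < m) (hk : 0 < k) :
    |ip (f m) (f k) - modSum m k / k| ≤ 1 / k := by
  have hk' : (0 : ℝ) < k := by exact_mod_cast hk
  have hle : 1 / (k : ℝ) ≤ 1 := by
    rw [div_le_one hk']; exact_mod_cast hk
  have hpos : 0 < 1 / (k : ℝ) := by positivity
  have hI := integrableOn_mul hm hk
  rw [ip, ← Set.Ioc_union_Ioc_eq_Ioc hpos.le hle,
    setIntegral_union (Set.Ioc_disjoint_Ioc_of_le le_rfl) measurableSet_Ioc
      (hI.mono_set (Set.Ioc_subset_Ioc le_rfl hle))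
      (hI.mono_set (Set.Ioc_subset_Ioc hpos.le le_rfl)),
    integral_blocks hm hk le_rfl, add_sub_cancel_right]
  have h := norm_setIntegral_le_of_norm_le_const (μ := volume) (s := Set.Ioc 0 (1 / (k : ℝ)))
    (f := fun x => f m x * f k x) (C := 1) (by simp) (by
      intro x hx
      have h1 := f_nonneg hm hx.1
      have h2 := f_nonneg hk hx.1
      rw [Real.norm_of_nonneg (by positivity)]
      exact mul_le_one₀ (f_le_one hm hx.1) h2 (f_le_one hk hx.1))
  rwa [Real.volume_real_Ioc_of_le hpos.le, one_mul, sub_zero, Real.norm_eq_abs] at h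

/-- The partial sums of `n mod m` minus its mean depend only on the last residue. -/
lemma sum_mod_sub {m : ℕ} (hm : 0 < m) (N : ℕ) :
    ∑ n ∈ range N, (((n % m : ℕ) : ℝ) - (m - 1) / 2)
      = ((N % m : ℕ) : ℝ) * (((N % m : ℕ) : ℝ) - m) / 2 := by
  induction N with
  | zero => simp
  | succ N ih =>
    rw [sum_range_succ, ih]
    have hlt := Nat.mod_lt N hm
    rcases Nat.lt_or_ge (N % m + 1) m with h | h
    · rw [Nat.add_mod_of_add_mod_lt (a := N) (b := 1) (c := m)]
      · rw [Nat.mod_eq_of_lt (show 1 < m by omega)]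
        push_cast
        ring
      · rw [Nat.mod_eq_of_lt (show 1 < m by omega)]; exact h
    · have he : N % m + 1 = m := by omega
      have h0 : (N + 1) % m = 0 := by
        rw [← Nat.mod_add_mod, he, Nat.mod_self]
      have he' : ((N % m : ℕ) : ℝ) = m - 1 := by
        rw [eq_sub_iff_add_eq]; exact_mod_cast he
      rw [h0, he']
      push_cast
      ring

lemma tendsto_log_nat : Tendsto (fun k : ℕ => Real.log k) atTop atTop :=
  Real.tendsto_log_atTop.comp tendsto_natCast_atTop_atTop

lemma tendsto_modSum_div_log {m : ℕ} (hm : 0 < m) :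
    Tendsto (fun k : ℕ => modSum m k / Real.log k) atTop (𝓝 (((m : ℝ) - 1) / (2 * m))) := by
  have hm' : (0 : ℝ) < m := by exact_mod_cast hm
  -- Dirichlet's test: the sum with the mean of `n mod m` removed converges.
  have hC : CauchySeq fun k : ℕ =>
      ∑ n ∈ range k, (1 / ((n : ℝ) + 1)) • (((n % m : ℕ) : ℝ) - (m - 1) / 2) := by
    refine Antitone.cauchySeq_series_mul_of_tendsto_zero_of_bounded (b := (m : ℝ) * m) ?_
      tendsto_one_div_add_atTop_nhds_zero_nat ?_
    · intro a b hab
      have : (a : ℝ) ≤ b := by exact_mod_cast hab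
      show 1 / ((b : ℝ) + 1) ≤ 1 / ((a : ℝ) + 1)
      gcongr
    · intro N
      rw [sum_mod_sub hm, Real.norm_eq_abs]
      have h1 : ((N % m : ℕ) : ℝ) ≤ m := by exact_mod_cast (Nat.mod_lt N hm).le
      have h0 : (0 : ℝ) ≤ ((N % m : ℕ) : ℝ) := by positivity
      rw [abs_le]
      constructor <;> nlinarith [mul_nonneg h0 (sub_nonneg.2 h1)]
  obtain ⟨L, hL⟩ := cauchySeq_tendsto_of_complete hC
  have h1 := hL.div_atTop tendsto_log_nat
  have h2 : Tendsto (fun k : ℕ => (harmonic k : ℝ) / Real.log k) atTop (𝓝 1) := by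
    have h := (Real.tendsto_harmonic_sub_log.div_atTop tendsto_log_nat).add_const 1
    rw [zero_add] at h
    refine h.congr' ?_
    filter_upwards [tendsto_log_nat.eventually_gt_atTop 0] with k hk
    field_simp
    ring
  have h3 := (h1.div_const (m : ℝ)).add (h2.const_mul (((m : ℝ) - 1) / (2 * m)))
  rw [zero_div, zero_add, mul_one] at h3
  refine h3.congr fun k => ?_
  have hs : modSum m k
      = (∑ n ∈ range k, (1 / ((n : ℝ) + 1)) • (((n % m : ℕ) : ℝ) - (m - 1) / 2)) / m
        + ((m : ℝ) - 1) / (2 * m) * (harmonic k : ℝ) := by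
    rw [modSum, harmonic]
    push_cast
    rw [sum_div, mul_sum, ← sum_add_distrib]
    refine sum_congr rfl fun n _ => ?_
    rw [smul_eq_mul]
    field_simp
    ring
  rw [hs]
  ring

lemma tendsto_ip {m : ℕ} (hm : 0 < m) :
    Tendsto (fun k : ℕ => ip (f m) (f k) / (Real.log k / (2 * k))) atTop
      (𝓝 (((m : ℝ) - 1) / m)) := by
  have hm' : (0 : ℝ) < m := by exact_mod_cast hm
  have h1 := (tendsto_modSum_div_log hm).const_mul 2
  have h2 : Tendsto (fun k : ℕ => (ip (f m) (f k) - modSum m k / k) / (Real.log k / (2 * k)))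
      atTop (𝓝 0) := by
    refine squeeze_zero_norm' ?_ ((tendsto_const_nhds (x := (2 : ℝ))).div_atTop tendsto_log_nat)
    filter_upwards [tendsto_log_nat.eventually_gt_atTop 0, eventually_gt_atTop 0] with k hk hk0
    have hk' : (0 : ℝ) < k := by exact_mod_cast hk0
    rw [norm_div, Real.norm_eq_abs, Real.norm_of_nonneg (by positivity)]
    calc _ ≤ (1 / (k : ℝ)) / (Real.log k / (2 * k)) := by gcongr; exact abs_ip_sub_le hm hk0
      _ = 2 / Real.log k := by field_simp
  have h3 := h2.add h1
  rw [show (0 : ℝ) + 2 * ((m - 1) / (2 * m)) = (m - 1) / m by field_simp; ring] at h3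
  refine h3.congr' ?_
  filter_upwards [tendsto_log_nat.eventually_gt_atTop 0, eventually_gt_atTop 0] with k hk hk0
  have hk' : (0 : ℝ) < k := by exact_mod_cast hk0
  field_simp
  ring

/-- A scalar `l`, in the application `log k / (2k)`, divides only the last column of `Gbr`; the last
row takes the same form as the others because `g = f j`. -/
lemma Gbr_div {j : ℕ} (hj : 2 ≤ j) (h : ℝ → ℝ) (l : ℝ) :
    Gbr j (f j) h / l = Matrix.det (Matrix.of fun r s : Fin (j - 1) =>
      if s.val = j - 2 then ip (f (r.val + 2)) h / l
      else ip (f (r.val + 2)) (f (s.val + 2))) := by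
  have hrow : ∀ r : Fin (j - 1), (if r.val = j - 2 then f j else f (r.val + 2)) = f (r.val + 2) := by
    intro r
    split_ifs with hr
    · congr 1; omega
    · rfl
  let c : Fin (j - 1) := ⟨j - 2, by omega⟩
  have key := Matrix.det_updateCol_smul (Matrix.of fun r s : Fin (j - 1) =>
      ip (f (r.val + 2)) (if s.val = j - 2 then h else f (s.val + 2))) c l⁻¹
      (fun r => ip (f (r.val + 2)) h)
  have e1 : (Matrix.of fun r s : Fin (j - 1) =>
      if s.val = j - 2 then ip (f (r.val + 2)) h / l
      else ip (f (r.val + 2)) (f (s.val + 2))) =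
      Matrix.updateCol (Matrix.of fun r s : Fin (j - 1) =>
        ip (f (r.val + 2)) (if s.val = j - 2 then h else f (s.val + 2))) c
        (l⁻¹ • fun r => ip (f (r.val + 2)) h) := by
    ext r s
    by_cases hs : s.val = j - 2
    · have : s = c := Fin.ext hs
      subst this
      simp [c, div_eq_inv_mul]
    · have : s ≠ c := fun h => hs (congrArg Fin.val h)
      simp [hs, this]
  have e2 : Matrix.updateCol (Matrix.of fun r s : Fin (j - 1) =>
        ip (f (r.val + 2)) (if s.val = j - 2 then h else f (s.val + 2))) c
        (fun r => ip (f (r.val + 2)) h) = Matrix.of fun r s : Fin (j - 1) =>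
        ip (f (r.val + 2)) (if s.val = j - 2 then h else f (s.val + 2)) := by
    ext r s
    by_cases hs : s = c
    · subst hs
      simp [c]
    · simp [hs]
  rw [e1, key, e2, Gbr, div_eq_inv_mul]
  simp only [hrow]

/-- `lim_{k→∞} G(f₂,…,f_{j−1}|f_j,f_k) / ((log k)/(2k)) = H(j)`. -/
theorem stmt_11 (j : ℕ) (hj : 2 ≤ j) :
    Filter.Tendsto (fun k : ℕ => Gbr j (f j) (f k) / (Real.log k / (2 * k)))
      Filter.atTop (nhds (H j)) := by
  simp only [Gbr_div hj]
  refine ((continuous_id.matrix_det).tendsto _).comp ?_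
  refine tendsto_pi_nhds.2 fun r => tendsto_pi_nhds.2 fun s => ?_
  simp only [Matrix.of_apply]
  split_ifs with hs
  · have h := tendsto_ip (m := r.val + 2) (by omega)
    rw [show (((r.val + 2 : ℕ) : ℝ) - 1) / ((r.val + 2 : ℕ) : ℝ)
      = ((r.val : ℝ) + 1) / ((r.val : ℝ) + 2) by push_cast; ring] at h
    exact h
  · exact tendsto_const_nhds
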